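/- Let m ≥ 9 and let A ≥ 1 and B ∈ {-1, 0, 1, 2, 3, 4, 5, 6} be integers. Then there exist integers x₁,…,x₅ with P_m(x₁) + P_m(x₂) + P_m(x₃) + P_m(x₄) + 2P_m(x₅) = A(m-2) + B (whenever A(m-2)+B > 0). -/

import Mathlib

/-- The generalized `m`-gonal number `P_m(x) = ((m-2)x² - (m-4)x)/2`. -/
def polygonal (m x : ℤ) : ℤ := ((m - 2) * x ^ 2 - (m - 4) * x) / 2

/-- Integer Gram realisability of a ternary form. -/
def GramR (a b c d e f : ℤ) : Prop :=
  ∃ u1 u2 u3 v1 v2 v3 w1 w2 w3 : ℤ,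
    u1 * u1 + u2 * u2 + u3 * u3 = a ∧ u1 * v1 + u2 * v2 + u3 * v3 = b ∧
    u1 * w1 + u2 * w2 + u3 * w3 = c ∧ v1 * v1 + v2 * v2 + v3 * v3 = d ∧
    v1 * w1 + v2 * w2 + v3 * w3 = e ∧ w1 * w1 + w2 * w2 + w3 * w3 = f

lemma gram_swap12 {a b c d e f : ℤ} (h : GramR d b e a c f) : GramR a b c d e f := by
  obtain ⟨u1, u2, u3, v1, v2, v3, w1, w2, w3, h1, h2, h3, h4, h5, h6⟩ := h
  exact ⟨v1, v2, v3, u1, u2, u3, w1, w2, w3, h4, by linarith, h5, h1, h3, h6⟩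

lemma gram_swap23 {a b c d e f : ℤ} (h : GramR a c b f e d) : GramR a b c d e f := by
  obtain ⟨u1, u2, u3, v1, v2, v3, w1, w2, w3, h1, h2, h3, h4, h5, h6⟩ := h
  exact ⟨u1, u2, u3, w1, w2, w3, v1, v2, v3, h1, h3, h2, h6, by linarith, h4⟩

lemma gram_add12 {a b c d e f : ℤ} (k : ℤ)
    (h : GramR a (b + k * a) c (d + 2 * k * b + k ^ 2 * a) (e + k * c) f) :
    GramR a b c d e f := by
  obtain ⟨u1, u2, u3, v1, v2, v3, w1, w2, w3, h1, h2, h3, h4, h5, h6⟩ := h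
  refine ⟨u1, u2, u3, v1 - k * u1, v2 - k * u2, v3 - k * u3, w1, w2, w3, h1, ?_, h3, ?_, ?_, h6⟩
  · linear_combination h2 - k * h1
  · linear_combination h4 - 2 * k * h2 + k ^ 2 * h1
  · linear_combination h5 - k * h3

lemma gram_add23 {a b c d e f : ℤ} (k : ℤ)
    (h : GramR a b (c + k * b) d (e + k * d) (f + 2 * k * e + k ^ 2 * d)) :
    GramR a b c d e f := by
  obtain ⟨u1, u2, u3, v1, v2, v3, w1, w2, w3, h1, h2, h3, h4, h5, h6⟩ := h
  refine ⟨u1, u2, u3, v1, v2, v3, w1 - k * v1, w2 - k * v2, w3 - k * v3, h1, h2, ?_, h4, ?_, ?_⟩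
  · linear_combination h3 - k * h2
  · linear_combination h5 - k * h4
  · linear_combination h6 - 2 * k * h5 + k ^ 2 * h4

lemma exists_centered (a b : ℤ) (ha : 0 < a) : ∃ k : ℤ, -a ≤ 2 * (b + k * a) ∧ 2 * (b + k * a) ≤ a := by
  refine ⟨-((2 * b + a) / (2 * a)), ?_⟩
  have h1 := Int.emod_add_mul_ediv (2 * b + a) (2 * a)
  have h2 := Int.emod_nonneg (2 * b + a) (b := 2 * a) (by omega)
  have h3 := Int.emod_lt_of_pos (2 * b + a) (b := 2 * a) (by omega)
  constructor <;> nlinarith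

/-- A positive definite ternary form of determinant one, already reduced. -/
lemma gram_reduced {a b c d e f : ℤ} (ha : 0 < a) (hD : 0 < a * d - b ^ 2)
    (hdet : (a * d - b ^ 2) * (a * f - c ^ 2) - (a * e - b * c) ^ 2 = a)
    (hb1 : -a ≤ 2 * b) (hb2 : 2 * b ≤ a) (had : a ≤ d)
    (hE1 : -(a * d - b ^ 2) ≤ 2 * (a * e - b * c)) (hE2 : 2 * (a * e - b * c) ≤ a * d - b ^ 2)
    (hF : a * d - b ^ 2 ≤ a * f - c ^ 2) : GramR a b c d e f := by
  generalize hDD : a * d - b ^ 2 = D at *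
  generalize hEE : a * e - b * c = E at *
  generalize hFF : a * f - c ^ 2 = F at *
  have h1 : 3 * D ^ 2 ≤ 4 * a := by nlinarith
  have h2 : 3 * a ^ 2 ≤ 4 * D := by nlinarith
  have ha1 : a = 1 := by
    by_contra hne
    have ha2 : 2 ≤ a := by omega
    have hD3 : 3 ≤ D := by nlinarith
    nlinarith
  subst ha1
  have hD1 : D = 1 := by nlinarith
  have hb : b = 0 := by omega
  have hE : E = 0 := by omega
  subst hb hE hD1
  refine ⟨1, 0, 0, 0, 1, 0, c, 0, 1, ?_, ?_, ?_, ?_, ?_, ?_⟩ <;> nlinarith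

lemma gram_all (N : ℕ) : ∀ M : ℕ, ∀ a b c d e f : ℤ, 0 < a → a ≤ N → 0 < a * d - b ^ 2 →
    a * d - b ^ 2 ≤ M →
    a * d * f + 2 * b * c * e - a * e ^ 2 - d * c ^ 2 - f * b ^ 2 = 1 → GramR a b c d e f := by
  induction N with
  | zero => intro M a b c d e f h1 h2; push_cast at h2; omega
  | succ N ihN =>
  intro M
  induction M with
  | zero => intro a b c d e f _ _ h1 h2; push_cast at h2; omega
  | succ M ihM =>
  have key : ∀ a b c d e f : ℤ, 0 < a → a ≤ (N + 1 : ℕ) → 0 < a * d - b ^ 2 →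
      a * d - b ^ 2 ≤ (M + 1 : ℕ) →
      a * d * f + 2 * b * c * e - a * e ^ 2 - d * c ^ 2 - f * b ^ 2 = 1 →
      -(a * d - b ^ 2) ≤ 2 * (a * e - b * c) → 2 * (a * e - b * c) ≤ a * d - b ^ 2 →
      -a ≤ 2 * b → 2 * b ≤ a → a * d - b ^ 2 ≤ a * f - c ^ 2 → GramR a b c d e f := by
    intro a b c d e f ha haN hD hDM hdet hE1 hE2 hb1 hb2 hF
    by_cases had : a ≤ d
    · exact gram_reduced ha hD (by linear_combination a * hdet) hb1 hb2 had hE1 hE2 hF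
    · apply gram_swap12
      have hd : 0 < d := by nlinarith [sq_nonneg b]
      refine ihN (a * d - b ^ 2).toNat d b e a c f hd (by push_cast at haN; omega)
        (by linarith) ?_ (by linear_combination hdet)
      rw [Int.toNat_of_nonneg hD.le]; linarith
  intro a b c d e f ha haN hD hDM hdet
  obtain ⟨k, hk1, hk2⟩ := exists_centered (a * d - b ^ 2) (a * e - b * c) hD
  apply gram_add23 k
  have e1 : (a * e - b * c) + k * (a * d - b ^ 2) = a * (e + k * d) - b * (c + k * b) := by ring
  have hdet' : a * d * (f + 2 * k * e + k ^ 2 * d) + 2 * b * (c + k * b) * (e + k * d)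
      - a * (e + k * d) ^ 2 - d * (c + k * b) ^ 2 - (f + 2 * k * e + k ^ 2 * d) * b ^ 2 = 1 := by
    linear_combination hdet
  rw [e1] at hk1 hk2
  clear e1 hdet
  revert hk1 hk2 hdet'
  generalize f + 2 * k * e + k ^ 2 * d = f'
  generalize c + k * b = c'
  generalize e + k * d = e'
  intro hk1 hk2 hdet
  by_cases hF : a * f' - c' ^ 2 < a * d - b ^ 2
  · apply gram_swap23
    have hp : (a * d - b ^ 2) * (a * f' - c' ^ 2) = a + (a * e' - b * c') ^ 2 := by
      linear_combination a * hdet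
    have hF0 : 0 < a * f' - c' ^ 2 := by
      by_contra hneg
      nlinarith [sq_nonneg (a * e' - b * c')]
    exact ihM a c' b f' e' d ha haN hF0 (by push_cast at hDM; omega) (by linear_combination hdet)
  · obtain ⟨j, hj1, hj2⟩ := exists_centered a b ha
    apply gram_add12 j
    have i1 : a * (d + 2 * j * b + j ^ 2 * a) - (b + j * a) ^ 2 = a * d - b ^ 2 := by ring
    have i2 : a * (e' + j * c') - (b + j * a) * c' = a * e' - b * c' := by ring
    apply key _ _ _ _ _ _ ha haN (by rw [i1]; exact hD) (by rw [i1]; exact hDM)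
      (by linear_combination hdet) (by rw [i1, i2]; exact hk1) (by rw [i1, i2]; exact hk2) hj1 hj2
      (by rw [i1]; linarith)

/-- Dirichlet's criterion: `-d` a square modulo `d n - 1` makes `n` a sum of three squares. -/
lemma three_of_dvd (n d x k : ℤ) (hd : 0 < d) (hD : 0 < d * n - 1)
    (h : x ^ 2 + d = k * (d * n - 1)) : ∃ u v w : ℤ, n = u ^ 2 + v ^ 2 + w ^ 2 := by
  have hg : GramR (d * n - 1) x 0 k 1 n := by
    apply gram_all (d * n - 1).toNat d.toNat _ _ _ _ _ _ hD
    · rw [Int.toNat_of_nonneg hD.le]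
    · linarith
    · rw [Int.toNat_of_nonneg hd.le]; linarith
    · linear_combination (-n) * h
  obtain ⟨u1, u2, u3, v1, v2, v3, w1, w2, w3, h1, h2, h3, h4, h5, h6⟩ := hg
  exact ⟨w1, w2, w3, by linarith⟩

open NumberTheorySymbols

lemma sq_of_jacobi (p : ℕ) (hp : p.Prime) (d : ℤ) (h : J(-d | p) = 1) :
    ∃ x k : ℤ, x ^ 2 + d = k * p := by
  have := Fact.mk hp
  obtain ⟨y, hy⟩ := ZMod.isSquare_of_jacobiSym_eq_one h
  obtain ⟨x, rfl⟩ := ZMod.intCast_surjective y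
  have : ((x ^ 2 + d : ℤ) : ZMod p) = 0 := by
    push_cast at hy ⊢
    linear_combination -hy
  rw [ZMod.intCast_zmod_eq_zero_iff_dvd] at this
  obtain ⟨k, hk⟩ := this
  exact ⟨x, k, by rw [hk]; ring⟩

lemma chi8_one (d : ℕ) (h : d % 8 = 1) : J(-2 | d) = 1 := by
  rw [jacobiSym.at_neg_two (Nat.odd_iff.mpr (by omega)), ZMod.χ₈'_nat_eq_if_mod_eight]
  simp [h]; omega

lemma chi8_three (d : ℕ) (h : d % 8 = 3) : J(-2 | d) = 1 := by
  rw [jacobiSym.at_neg_two (Nat.odd_iff.mpr (by omega)), ZMod.χ₈'_nat_eq_if_mod_eight]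
  simp [h]; omega

lemma three_two_mod_four (n : ℕ) (hn : n % 4 = 2) : ∃ u v w : ℤ, (n : ℤ) = u ^ 2 + v ^ 2 + w ^ 2 := by
  have hco : (n - 1).Coprime (4 * n) := by
    apply Nat.Coprime.mul_right
    · have : (n - 1).Coprime (2 ^ 2) := Nat.Coprime.pow_right _ (Nat.coprime_two_right.mpr (Nat.odd_iff.mpr (by omega)))
      simpa using this
    · exact (Nat.coprime_self_sub_left (by omega)).mpr (by simp)
  obtain ⟨p, hpn, hp, hmod⟩ := Nat.forall_exists_prime_gt_and_modEq (n + 2) (q := 4 * n) (by omega) hco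
  obtain ⟨j, hj⟩ := (Nat.modEq_iff_dvd' (by omega)).mp hmod.symm
  have hpj : p + 1 = (4 * j + 1) * n := by
    have : p = 4 * n * j + (n - 1) := by omega
    zify [show 1 ≤ n by omega] at this ⊢
    linear_combination this
  have hp4 : p % 4 = 1 := by
    have : p = 4 * (n * j) + (n - 1) := by rw [← mul_assoc]; omega
    omega
  have hJ : J(-((4 * j + 1 : ℕ) : ℤ) | p) = 1 := by
    have hpo : Odd p := Nat.odd_iff.mpr (by omega)
    have hdo : Odd (4 * j + 1) := Nat.odd_iff.mpr (by omega)
    rw [jacobiSym.neg _ hpo, ZMod.χ₄_nat_one_mod_four hp4, one_mul,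
      jacobiSym.quadratic_reciprocity_one_mod_four' hdo hp4]
    have : J((p : ℤ) | 4 * j + 1) = J(-1 | 4 * j + 1) := by
      apply jacobiSym.mod_left'
      apply Int.ModEq.symm
      rw [Int.modEq_iff_dvd]
      exact ⟨n, by push_cast; zify at hpj; linear_combination hpj⟩
    rw [this, jacobiSym.at_neg_one hdo, ZMod.χ₄_nat_one_mod_four (by omega)]
  obtain ⟨x, k, hk⟩ := sq_of_jacobi p hp _ hJ
  have hpz : (p : ℤ) = ((4 * j + 1 : ℕ) : ℤ) * n - 1 := by
    zify at hpj; push_cast; linear_combination hpj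
  refine three_of_dvd n ((4 * j + 1 : ℕ) : ℤ) x k (by positivity) ?_ ?_
  · rw [← hpz]; exact_mod_cast hp.pos
  · rw [← hpz]; exact hk

lemma three_odd (n c : ℕ) (h : (n % 8 = 3 ∧ c = 1) ∨ (n % 4 = 1 ∧ c = 3)) :
    ∃ u v w : ℤ, (n : ℤ) = u ^ 2 + v ^ 2 + w ^ 2 := by
  obtain ⟨r, hr⟩ : ∃ r, c * n = 2 * r + 1 := by
    obtain ⟨h, rfl⟩ | ⟨h, rfl⟩ := h
    · exact ⟨n / 2, by omega⟩
    · exact ⟨3 * n / 2, by omega⟩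
  have hco : r.Coprime (4 * n) := by
    apply Nat.Coprime.mul_right
    · have : r.Coprime (2 ^ 2) := Nat.Coprime.pow_right _ (Nat.coprime_two_right.mpr (Nat.odd_iff.mpr (by
        obtain ⟨h, rfl⟩ | ⟨h, rfl⟩ := h <;> omega)))
      simpa using this
    · rw [← Nat.isCoprime_iff_coprime]
      exact ⟨-2, c, by zify at hr; linear_combination hr⟩
  obtain ⟨p, hpn, hp, hmod⟩ := Nat.forall_exists_prime_gt_and_modEq (r + 2) (q := 4 * n) (by omega) hco
  obtain ⟨j, hj⟩ := (Nat.modEq_iff_dvd' (by omega)).mp hmod.symm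
  have hpr : p = 4 * (n * j) + r := by rw [← mul_assoc]; omega
  obtain ⟨d, hd⟩ : ∃ d, d = 8 * j + c := ⟨_, rfl⟩
  have hpj : (2 * p : ℤ) = d * n - 1 := by
    zify at hpr hd hr
    rw [hpr, hd]; linear_combination -hr
  have hdo : Odd d := Nat.odd_iff.mpr (by omega)
  have hpo : Odd p := Nat.odd_iff.mpr (by
        obtain ⟨h, rfl⟩ | ⟨h, rfl⟩ := h <;> omega)
  have hp2 : J((p : ℤ) | d) = 1 := by
    have hm2 : J(-2 | d) = 1 := by
      obtain ⟨h, rfl⟩ | ⟨h, rfl⟩ := h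
      · exact chi8_one d (by omega)
      · exact chi8_three d (by omega)
    have e1 : J(-2 * (p : ℤ) | d) = J(1 | d) := by
      apply jacobiSym.mod_left'
      apply Int.ModEq.symm
      rw [Int.modEq_iff_dvd]
      exact ⟨-n, by linear_combination -hpj⟩
    rwa [jacobiSym.mul_left, hm2, one_mul, jacobiSym.one_left] at e1
  have hJ : J(-(d : ℤ) | p) = 1 := by
    rw [jacobiSym.neg _ hpo]
    have : (p % 4 = 1) ∨ (p % 4 = 3 ∧ d % 4 = 3) := by
      obtain ⟨h, rfl⟩ | ⟨h, rfl⟩ := h <;> omega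
    obtain hp4 | ⟨hp4, hd4⟩ := this
    · rw [ZMod.χ₄_nat_one_mod_four hp4, one_mul,
        jacobiSym.quadratic_reciprocity_one_mod_four' hdo hp4, hp2]
    · rw [ZMod.χ₄_nat_three_mod_four hp4,
        jacobiSym.quadratic_reciprocity_three_mod_four hd4 hp4, hp2]; norm_num
  obtain ⟨x, k, hk⟩ := sq_of_jacobi p hp _ hJ
  have hx : ∃ x k : ℤ, x ^ 2 + d = k * (2 * p) := by
    have hpz : (p : ℤ) % 2 = 1 := by exact_mod_cast Nat.odd_iff.mp hpo
    have hdz : (d : ℤ) % 2 = 1 := by exact_mod_cast Nat.odd_iff.mp hdo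
    have gen : ∀ x k : ℤ, x % 2 = 1 → x ^ 2 + d = k * p → ∃ x k : ℤ, x ^ 2 + d = k * (2 * p) := by
      intro x k hx hk
      obtain ⟨y, rfl⟩ : ∃ y, x = 2 * y + 1 := ⟨x / 2, by omega⟩
      have hev : (2 : ℤ) ∣ k := by
        have h2 : (2 : ℤ) ∣ k * p := by
          rw [← hk]
          obtain ⟨z, hz⟩ : ∃ z : ℤ, (d : ℤ) = 2 * z + 1 := ⟨d / 2, by omega⟩
          rw [hz]; exact ⟨2 * y ^ 2 + 2 * y + 1 + z, by ring⟩
        rcases Int.prime_two.dvd_or_dvd h2 with h | h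
        · exact h
        · omega
      obtain ⟨l, rfl⟩ := hev
      exact ⟨2 * y + 1, l, by rw [hk]; ring⟩
    rcases Int.emod_two_eq_zero_or_one x with h0 | h1
    · exact gen (x + p) (k + 2 * x + p) (by omega) (by linear_combination hk)
    · exact gen x k h1 hk
  obtain ⟨x, k, hk⟩ := hx
  refine three_of_dvd n d x k (by have := hdo.pos; exact_mod_cast this) ?_ ?_
  · rw [← hpj]; have := hp.pos; positivity
  · rw [← hpj]; exact hk

lemma polygonal_eq (m x : ℤ) : 2 * polygonal m x = (m - 2) * x ^ 2 - (m - 4) * x := by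
  unfold polygonal
  apply Int.mul_ediv_cancel'
  obtain ⟨k, hk⟩ := (Int.even_mul_succ_self (x - 1)).two_dvd
  exact ⟨(m - 2) * k + x, by linear_combination (m - 2) * hk⟩

lemma rep_of (m A B x₁ x₂ x₃ x₄ x₅ : ℤ) (h1 : x₁ + x₂ + x₃ + x₄ + 2 * x₅ = B)
    (h2 : x₁ ^ 2 + x₂ ^ 2 + x₃ ^ 2 + x₄ ^ 2 + 2 * x₅ ^ 2 = 2 * A + B) :
    ∃ x₁ x₂ x₃ x₄ x₅ : ℤ,
      polygonal m x₁ + polygonal m x₂ + polygonal m x₃ + polygonal m x₄ +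
        2 * polygonal m x₅ = A * (m - 2) + B := by
  refine ⟨x₁, x₂, x₃, x₄, x₅, ?_⟩
  have a1 := polygonal_eq m x₁
  have a2 := polygonal_eq m x₂
  have a3 := polygonal_eq m x₃
  have a4 := polygonal_eq m x₄
  have a5 := polygonal_eq m x₅
  have : 2 * (polygonal m x₁ + polygonal m x₂ + polygonal m x₃ + polygonal m x₄ +
        2 * polygonal m x₅) = 2 * (A * (m - 2) + B) := by
    linear_combination a1 + a2 + a3 + a4 + 2 * a5 + (m - 2) * h2 - (m - 4) * h1
  linarith

/-- Odd case. -/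
lemma rep_odd (m A B : ℤ) (hB : B % 2 = 1) (hN : 0 < 8 * A + 4 * B - B ^ 2) :
    ∃ x₁ x₂ x₃ x₄ x₅ : ℤ,
      polygonal m x₁ + polygonal m x₂ + polygonal m x₃ + polygonal m x₄ +
        2 * polygonal m x₅ = A * (m - 2) + B := by
  obtain ⟨b, rfl⟩ : ∃ b, B = 2 * b + 1 := ⟨B / 2, by omega⟩
  obtain ⟨t, ht⟩ := (Int.even_mul_succ_self b).two_dvd
  have hmod : (8 * A + 4 * (2 * b + 1) - (2 * b + 1) ^ 2) % 8 = 3 := by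
    have : 8 * A + 4 * (2 * b + 1) - (2 * b + 1) ^ 2 = 8 * (A + b - t) + 3 := by
      linear_combination -4 * ht
    omega
  obtain ⟨n, hn⟩ := Int.eq_ofNat_of_zero_le hN.le
  obtain ⟨u, v, w, h⟩ := three_odd n 1 (Or.inl ⟨by omega, rfl⟩)
  rw [← hn] at h
  have par : ∀ y : ℤ, y ^ 2 % 8 = 0 ∧ y % 2 = 0 ∨ y ^ 2 % 8 = 4 ∧ y % 2 = 0 ∨ y ^ 2 % 8 = 1 ∧ y % 2 = 1 := by
    intro y
    have : y % 8 = 0 ∨ y % 8 = 1 ∨ y % 8 = 2 ∨ y % 8 = 3 ∨ y % 8 = 4 ∨ y % 8 = 5 ∨ y % 8 = 6 ∨ y % 8 = 7 := by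
      omega
    rcases this with h | h | h | h | h | h | h | h <;> simp [pow_two, Int.mul_emod, h] <;> omega
  have hu := par u
  have hv := par v
  have hw := par w
  have hu1 : u % 2 = 1 := by omega
  have hv1 : v % 2 = 1 := by omega
  have hw1 : w % 2 = 1 := by omega
  clear hu hv hw par
  have gen : ∀ w : ℤ, 8 * A + 4 * (2 * b + 1) - (2 * b + 1) ^ 2 = u ^ 2 + v ^ 2 + w ^ 2 → w % 2 = 1 →
      (2 * b + 1 + u + v + w) % 4 = 0 → ∃ x₁ x₂ x₃ x₄ x₅ : ℤ,
      polygonal m x₁ + polygonal m x₂ + polygonal m x₃ + polygonal m x₄ +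
        2 * polygonal m x₅ = A * (m - 2) + (2 * b + 1) := by
    intro w h hw h4
    obtain ⟨x, hx⟩ : ∃ x, 2 * b + 1 + u + v + w = 4 * x := ⟨(2 * b + 1 + u + v + w) / 4, by omega⟩
    obtain ⟨p, hp⟩ : ∃ p, v + w = 2 * p := ⟨(v + w) / 2, by omega⟩
    obtain ⟨q, hq⟩ : ∃ q, u + w = 2 * q := ⟨(u + w) / 2, by omega⟩
    obtain ⟨r, hr⟩ : ∃ r, u + v = 2 * r := ⟨(u + v) / 2, by omega⟩
    have hu : u = q + r - p := by omega
    have hv : v = p + r - q := by omega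
    have hw : w = p + q - r := by omega
    have hb : 2 * b + 1 = 4 * x - p - q - r := by omega
    rw [hb] at h ⊢
    subst hu hv hw
    apply rep_of m A _ x (x - p) (x - q) (x - r) 0
    · ring
    · linarith
  have : (2 * b + 1 + u + v + w) % 4 = 0 ∨ (2 * b + 1 + u + v + (-w)) % 4 = 0 := by omega
  rcases this with h4 | h4
  · exact gen w h hw1 h4
  · exact gen (-w) (by rw [h]; ring) (by omega) h4

lemma rep_even (m A c s : ℤ) (hN : 0 < 2 * A + 2 * c - 2 * (c - s) ^ 2 - s ^ 2)
    (hmod : (2 * A + 2 * c - 2 * (c - s) ^ 2 - s ^ 2) % 4 = 1 ∨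
      (2 * A + 2 * c - 2 * (c - s) ^ 2 - s ^ 2) % 4 = 2) :
    ∃ x₁ x₂ x₃ x₄ x₅ : ℤ,
      polygonal m x₁ + polygonal m x₂ + polygonal m x₃ + polygonal m x₄ +
        2 * polygonal m x₅ = A * (m - 2) + 2 * c := by
  have h3 : ∃ u v w : ℤ, 2 * A + 2 * c - 2 * (c - s) ^ 2 - s ^ 2 = u ^ 2 + v ^ 2 + w ^ 2 := by
    obtain ⟨n, hn⟩ := Int.eq_ofNat_of_zero_le hN.le
    rw [hn] at hmod ⊢
    rcases hmod with h | h
    · exact three_odd n 3 (Or.inr ⟨by omega, rfl⟩)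
    · exact three_two_mod_four n (by omega)
  obtain ⟨u, v, w, h⟩ := h3
  have hpar : (s + u + v + w) % 2 = 0 := by
    obtain ⟨a, ha⟩ := (Int.even_mul_succ_self s).two_dvd
    obtain ⟨b, hb⟩ := (Int.even_mul_succ_self u).two_dvd
    obtain ⟨d, hd⟩ := (Int.even_mul_succ_self v).two_dvd
    obtain ⟨e, he⟩ := (Int.even_mul_succ_self w).two_dvd
    have : s + u + v + w = 2 * (a + b + d + e - A - c + (c - s) ^ 2) := by
      linear_combination ha + hb + hd + he + h
    omega
  obtain ⟨x, hx⟩ : ∃ x, s + u + v + w = 2 * x := ⟨(s + u + v + w) / 2, by omega⟩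
  have hs : s = 2 * x - u - v - w := by omega
  apply rep_of m A _ x (x - v - w) (x - u - w) (x - u - v) (c - s)
  · linear_combination -2 * hs
  · subst hs
    linear_combination -h

theorem rep_11112 (m : ℤ) (hm : 9 ≤ m) (A B : ℤ) (hA : 1 ≤ A)
    (hB : -1 ≤ B ∧ B ≤ 6) (hpos : 0 < A * (m - 2) + B) :
    ∃ x₁ x₂ x₃ x₄ x₅ : ℤ,
      polygonal m x₁ + polygonal m x₂ + polygonal m x₃ + polygonal m x₄ +
        2 * polygonal m x₅ = A * (m - 2) + B := by
  obtain ⟨hB1, hB2⟩ := hB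
  rcases Int.emod_two_eq_zero_or_one B with h0 | h1
  · obtain ⟨c, rfl⟩ : ∃ c, B = 2 * c := ⟨B / 2, by omega⟩
    have hc0 : 0 ≤ c := by omega
    have hc3 : c ≤ 3 := by omega
    rcases Int.emod_two_eq_zero_or_one A with hA0 | hA1
    · interval_cases c
      · exact rep_even m A 0 1 (by omega) (by omega)
      · exact rep_even m A 1 1 (by omega) (by omega)
      · exact rep_even m A 2 1 (by omega) (by omega)
      · exact rep_even m A 3 1 (by omega) (by omega)
    · interval_cases c
      · exact rep_even m A 0 0 (by omega) (by omega)
      · exact rep_even m A 1 0 (by omega) (by omega)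
      · exact rep_even m A 2 2 (by omega) (by omega)
      · exact rep_even m A 3 2 (by omega) (by omega)
  · apply rep_odd m A B h1
    interval_cases B <;> omega
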